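/- Let ρ = e^{2πi/3} ∈ ℍ, let n ≥ 0, and let x_1, …, x_n ∈ (0,1) be pairwise distinct. Define f(τ) = η(τ)^{20} / ( E4(τ)² ∏_{j=1}^n (J(τ) − x_j)² ). Then f has a double pole at τ = ρ with vanishing residue; precisely, the limit as τ → ρ (τ ≠ ρ) of (d/dτ)[ (τ − ρ)² f(τ) ] equals 0. -/

import Mathlib

open Complex Filter Topology

noncomputable section

/-- The nome `q = e^{2πiτ}`. -/
def qq (τ : ℂ) : ℂ := Complex.exp (2 * Real.pi * Complex.I * τ)

/-- The Eisenstein series `E₄(τ) = 1 + 240 Σ_{n≥1} σ₃(n) qⁿ`. -/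
def E4 (τ : ℂ) : ℂ := 1 + 240 * ∑' n : ℕ, (∑ d ∈ (n + 1).divisors, (d : ℂ) ^ 3) * qq τ ^ (n + 1)

/-- The Eisenstein series `E₆(τ) = 1 − 504 Σ_{n≥1} σ₅(n) qⁿ`. -/
def E6 (τ : ℂ) : ℂ := 1 - 504 * ∑' n : ℕ, (∑ d ∈ (n + 1).divisors, (d : ℂ) ^ 5) * qq τ ^ (n + 1)

/-- The normalized elliptic modular function `J = E₄³ / (E₄³ − E₆²)`. -/
def J (τ : ℂ) : ℂ := E4 τ ^ 3 / (E4 τ ^ 3 - E6 τ ^ 2)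

/-- The Dedekind eta function `η(τ) = e^{πiτ/12} ∏_{n≥1} (1 − qⁿ)`. -/
def dedekindEta (τ : ℂ) : ℂ := Complex.exp (Real.pi * Complex.I * τ / 12) * ∏' n : ℕ, (1 - qq τ ^ (n + 1))

/-- The elliptic point `ρ = e^{2πi/3}`. -/
def rho : ℂ := Complex.exp (2 * Real.pi * Complex.I / 3)

/-!
If `f` and `h` are analytic at `p` and `p` is a simple zero of `h`, then the residue of `f / h ^ 2`
at `p` is `(f' h' - f h'') / h' ^ 3`, evaluated at `p`. For `h = E₄` the right-hand side is governed
by Ramanujan's differential equations, which in terms of `η` (where `η' / η = (π i / 12) E₂`) read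
`E₄' = 8 (η' / η) E₄ - (2 π i / 3) E₆` and `E₆' = 12 (η' / η) E₆ - π i E₄ ^ 2`.
At a zero of `E₄` they give `E₄'' = 20 (η' / η) E₄'`. The numerator `f = η ^ 20 g(J)` satisfies
`f' = 20 (η' / η) f` there, since `J` is a multiple of `E₄ ^ 3` and so has vanishing derivative:
the exponent `20 = 8 + 12` is exactly the one for which the residue cancels.
-/

open UpperHalfPlane hiding I J
open ModularForm (E₄ E₆)
open EisensteinSeries (E2)
open Derivative
open scoped MatrixGroups ModularForm Manifold

section DoublePole

variable {𝕜 : Type*} [NontriviallyNormedField 𝕜] {f h : 𝕜 → 𝕜} {p : 𝕜}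

lemma analyticAt_dslope (hh : AnalyticAt 𝕜 h p) : AnalyticAt 𝕜 (dslope h p) p :=
  let ⟨_, hs⟩ := hh
  ⟨_, hs.has_fpower_series_dslope_fslope⟩

variable [CompleteSpace 𝕜]

lemma deriv_deriv_eq_two_mul_deriv_dslope (hh : AnalyticAt 𝕜 h p) :
    deriv (deriv h) p = 2 * deriv (dslope h p) p := by
  have hk := analyticAt_dslope hh
  have hfactor : h = fun z ↦ h p + (z - p) * dslope h p z := by
    funext z
    rw [← smul_eq_mul, sub_smul_dslope, add_sub_cancel]
  have hderiv : deriv h =ᶠ[𝓝 p] fun z ↦ dslope h p z + (z - p) * deriv (dslope h p) z := by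
    filter_upwards [hk.eventually_analyticAt] with z hz
    conv_lhs => rw [hfactor]
    simpa using ((((hasDerivAt_id' z).sub_const p).fun_mul
      hz.differentiableAt.hasDerivAt).const_add (h p)).deriv
  rw [hderiv.deriv_eq, (hk.differentiableAt.hasDerivAt.fun_add
    (((hasDerivAt_id' p).sub_const p).fun_mul hk.deriv.differentiableAt.hasDerivAt)).deriv]
  simp only [one_mul, sub_self, zero_mul, add_zero]
  ring

/- Writing `h z = (z - p) * k z`, the function is `f / k ^ 2` near `p`, while `k p` and
`2 * deriv k p` are the first two derivatives of `h` at `p`. -/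
lemma tendsto_deriv_sub_sq_mul_div_sq (hf : AnalyticAt 𝕜 f p) (hh : AnalyticAt 𝕜 h p)
    (hp : h p = 0) (hd : deriv h p ≠ 0) :
    Tendsto (deriv fun z ↦ (z - p) ^ 2 * (f z / h z ^ 2)) (𝓝[≠] p)
      (𝓝 ((deriv f p * deriv h p - f p * deriv (deriv h) p) / deriv h p ^ 3)) := by
  set k := dslope h p with hk_def
  have hk : AnalyticAt 𝕜 k p := analyticAt_dslope hh
  have hkp : k p = deriv h p := dslope_same h p
  have hkp0 : k p ≠ 0 := hkp ▸ hd
  have hremoved : AnalyticAt 𝕜 (fun z ↦ f z / k z ^ 2) p :=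
    hf.fun_div (hk.fun_pow 2) (pow_ne_zero 2 hkp0)
  have hvalue : deriv (fun z ↦ f z / k z ^ 2) p =
      (deriv f p * deriv h p - f p * deriv (deriv h) p) / deriv h p ^ 3 := by
    rw [(hf.differentiableAt.hasDerivAt.fun_div (hk.differentiableAt.hasDerivAt.fun_pow 2)
      (pow_ne_zero 2 hkp0)).deriv, deriv_deriv_eq_two_mul_deriv_dslope hh, ← hk_def, ← hkp]
    field_simp
    simp only [Nat.cast_ofNat, Nat.add_one_sub_one, pow_one]
    ring
  rw [← hvalue]
  refine (hremoved.deriv.continuousAt.tendsto.mono_left nhdsWithin_le_nhds).congr' ?_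
  filter_upwards [self_mem_nhdsWithin] with τ hτ
  refine EventuallyEq.deriv_eq ?_
  filter_upwards [isOpen_ne.mem_nhds hτ] with z hz
  have hz0 : z - p ≠ 0 := sub_ne_zero.mpr hz
  have hhz : h z = (z - p) * k z := by
    rw [← smul_eq_mul, sub_smul_dslope_of_zero hp]
  rw [hhz, mul_pow, ← mul_div_assoc, mul_div_mul_left _ _ (pow_ne_zero 2 hz0)]

end DoublePole

section LimitAtInfinity

lemma tendsto_atImInfty_of_hasSum_qExpansion {f : ℍ → ℂ} {c : ℕ → ℂ} {w : ℝ} (hw : 0 < w)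
    (hf : ∀ τ : ℍ, HasSum (fun m ↦ c m • Function.Periodic.qParam w τ ^ m) (f τ)) :
    Tendsto f atImInfty (𝓝 (c 0)) := by
  have hq0 (τ : ℍ) : Function.Periodic.qParam w τ ≠ 0 := Function.Periodic.qParam_ne_zero _
  have htail (τ : ℍ) : HasSum (fun m ↦ c (m + 1) • Function.Periodic.qParam w τ ^ m)
      ((f τ - c 0) / Function.Periodic.qParam w τ) := by
    have := ((hasSum_nat_add_iff' 1).mpr (hf τ)).div_const (Function.Periodic.qParam w τ)
    simpa [pow_succ, ← mul_assoc, hq0] using this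
  have hsmall : Tendsto (fun τ : ℍ ↦ f τ - c 0) atImInfty (𝓝 0) := by
    refine ((isBoundedAtImInfty_of_hasSum_qExpansion hw htail).mul_zeroAtFilter
      (qParam_tendsto_atImInfty hw)).congr fun τ ↦ ?_
    exact div_mul_cancel₀ _ (hq0 τ)
  simpa using hsmall.add_const (c 0)

lemma tendsto_E2_atImInfty : Tendsto E2 atImInfty (𝓝 1) :=
  tendsto_atImInfty_of_hasSum_qExpansion one_pos fun τ ↦ by
    simpa only [Function.Periodic.qParam, ofReal_one, div_one] using
      EisensteinSeries.hasSum_qExpansion_E2 (z := τ)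

variable {k : ℤ} (f : ModularForm 𝒮ℒ k)

lemma tendsto_qExpansion_coeff_zero_atImInfty :
    Tendsto f atImInfty (𝓝 ((qExpansion 1 f).coeff 0)) :=
  tendsto_atImInfty_of_hasSum_qExpansion one_pos
    (ModularForm.hasSum_qExpansion f one_pos one_mem_strictPeriods_SL)

lemma tendsto_E_atImInfty {k : ℕ} (hk : 3 ≤ k) (hk2 : Even k) :
    Tendsto (ModularForm.E hk) atImInfty (𝓝 1) :=
  EisensteinSeries.E_qExpansion_coeff_zero hk hk2 ▸
    tendsto_qExpansion_coeff_zero_atImInfty (ModularForm.E hk)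

variable {f} in
lemma eq_of_tendsto_atImInfty_of_weight_lt_twelve (hk : k < 12) {g : ModularForm 𝒮ℒ k} {c : ℂ}
    (hf : Tendsto f atImInfty (𝓝 c)) (hg : Tendsto g atImInfty (𝓝 c)) : f = g := by
  have hcoeff : (qExpansion 1 (f - g)).coeff 0 = 0 :=
    tendsto_nhds_unique (tendsto_qExpansion_coeff_zero_atImInfty (f - g))
      (sub_self c ▸ hf.sub hg)
  refine sub_eq_zero.mp (ModularForm.sturm_bound_levelOne ?_)
  rw [show k.toNat / 12 = 0 by lia, Nat.cast_zero, pos_iff_ne_zero,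
    PowerSeries.order_ne_zero_iff_constCoeff_eq_zero]
  simpa using hcoeff

lemma normalizedDerivOfComplex_eq_qParam_mul_deriv_cuspFunction (τ : ℍ) :
    normalizedDerivOfComplex f τ =
      Function.Periodic.qParam 1 τ * deriv (cuspFunction 1 f) (Function.Periodic.qParam 1 τ) := by
  have hper := SlashInvariantFormClass.periodic_comp_ofComplex f one_mem_strictPeriods_SL
  have hfactor : f ∘ ofComplex =ᶠ[𝓝 (τ : ℂ)] cuspFunction 1 f ∘ Function.Periodic.qParam 1 := by
    filter_upwards [isOpen_upperHalfPlaneSet.mem_nhds τ.im_pos] with w hw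
    rw [Function.comp_apply, ofComplex_apply_of_im_pos hw]
    exact (eq_cuspFunction ⟨w, hw⟩ one_ne_zero hper).symm
  have hq : HasDerivAt (Function.Periodic.qParam 1)
      (Function.Periodic.qParam 1 τ * (2 * Real.pi * Complex.I)) τ := by
    simpa +unfoldPartialApp [Function.Periodic.qParam] using
      (((hasDerivAt_id (τ : ℂ)).const_mul (2 * Real.pi * Complex.I)).div_const 1).cexp
  have hcusp := (differentiableAt_cuspFunction one_pos hper f.holo'
    (ModularFormClass.bdd_at_infty f)
    (Function.Periodic.norm_qParam_lt_one one_pos τ.im_pos)).hasDerivAt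
  rw [normalizedDerivOfComplex, hfactor.deriv_eq, (hcusp.comp (τ : ℂ) hq).deriv]
  field [two_pi_I_ne_zero]

lemma tendsto_normalizedDerivOfComplex_atImInfty :
    Tendsto (normalizedDerivOfComplex f) atImInfty (𝓝 0) := by
  have hq := qParam_tendsto_atImInfty one_pos
  have hcusp := ModularFormClass.analyticAt_cuspFunction_zero f one_pos one_mem_strictPeriods_SL
  refine Tendsto.congr
    (fun τ ↦ (normalizedDerivOfComplex_eq_qParam_mul_deriv_cuspFunction f τ).symm) ?_
  simpa using hq.mul (hcusp.deriv.continuousAt.tendsto.comp hq)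

end LimitAtInfinity

section Ramanujan

variable {k : ℤ}

lemma tendsto_serreDerivative_atImInfty {f : ModularForm 𝒮ℒ k} {c : ℂ}
    (hf : Tendsto f atImInfty (𝓝 c)) :
    Tendsto (serreDerivative k f) atImInfty (𝓝 (-(k / 12) * c)) := by
  have h := (tendsto_normalizedDerivOfComplex_atImInfty f).sub
    ((tendsto_E2_atImInfty.const_mul ((k : ℂ) * 12⁻¹)).mul hf)
  simpa [div_eq_mul_inv] using h

lemma serreDerivative_slash_eq (f : ModularForm 𝒮ℒ k) (γ : SL(2, ℤ)) :
    serreDerivative k f ∣[k + 2] γ = serreDerivative k f :=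
  serreDerivative_slash_invariant f.holo' (SlashInvariantForm.slash_action_eqn f _ ⟨γ, rfl⟩)

/-- The Serre derivative `D f - (k / 12) E₂ f` of a level one modular form `f` of weight `k`, as a
modular form of weight `k + 2`. -/
def serreDerivativeForm (f : ModularForm 𝒮ℒ k) : ModularForm 𝒮ℒ (k + 2) where
  toFun := serreDerivative k f
  slash_action_eq' := by
    rintro _ ⟨γ, rfl⟩
    exact serreDerivative_slash_eq f γ
  holo' := serreDerivative_mdifferentiable k f.holo'
  bdd_at_cusps' hc := by
    rw [Subgroup.IsArithmetic.isCusp_iff_isCusp_SL2Z] at hc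
    refine (OnePoint.isBoundedAt_iff_forall_SL2Z hc).mpr fun γ _ ↦ ?_
    rw [serreDerivative_slash_eq f γ]
    exact (tendsto_serreDerivative_atImInfty
      (tendsto_qExpansion_coeff_zero_atImInfty f)).isBigO_one ℝ

lemma serreDerivative_E₄ (z : ℍ) : serreDerivative 4 E₄ z = -(1 / 3) * E₆ z := by
  have hE₄ := tendsto_E_atImInfty (by norm_num : 3 ≤ 4) ⟨2, rfl⟩
  have hE₆ := tendsto_E_atImInfty (by norm_num : 3 ≤ 6) ⟨3, rfl⟩
  have heq : serreDerivativeForm E₄ = (-(1 / 3) : ℂ) • E₆ := by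
    refine eq_of_tendsto_atImInfty_of_weight_lt_twelve (by norm_num)
      (tendsto_serreDerivative_atImInfty hE₄) ?_
    convert! hE₆.const_mul (-(1 / 3) : ℂ) using 2
    norm_num
  exact DFunLike.congr_fun heq z

lemma serreDerivative_E₆ (z : ℍ) : serreDerivative 6 E₆ z = -(1 / 2) * E₄ z ^ 2 := by
  have hE₄ := tendsto_E_atImInfty (by norm_num : 3 ≤ 4) ⟨2, rfl⟩
  have hE₆ := tendsto_E_atImInfty (by norm_num : 3 ≤ 6) ⟨3, rfl⟩
  have heq : serreDerivativeForm E₆ = (-(1 / 2) : ℂ) • E₄.mul E₄ := by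
    refine eq_of_tendsto_atImInfty_of_weight_lt_twelve (by norm_num)
      (tendsto_serreDerivative_atImInfty hE₆) ?_
    convert! (hE₄.mul hE₄).const_mul (-(1 / 2) : ℂ) using 2
    norm_num
  rw [sq]
  exact DFunLike.congr_fun heq z

end Ramanujan

section Comparison

lemma dedekindEta_eq_eta : dedekindEta = ModularForm.eta := by
  funext z
  simp only [dedekindEta, ModularForm.eta, ModularForm.eta_q_eq_pow, qq, Function.Periodic.qParam]
  congr 2
  push_cast
  ring

lemma E_eq_one_sub_tsum_divisors {k : ℕ} (hk : 3 ≤ k) (hk2 : Even k) (z : ℍ) :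
    ModularForm.E hk z = 1 - 2 * k / bernoulli k *
      ∑' n : ℕ, (∑ d ∈ (n + 1).divisors, (d : ℂ) ^ (k - 1)) * qq z ^ (n + 1) := by
  rw [EisensteinSeries.q_expansion_bernoulli hk hk2,
    tsum_pnat_eq_tsum_succ (f := fun n ↦ (ArithmeticFunction.sigma (k - 1) n : ℂ) *
      cexp (2 * Real.pi * Complex.I * z) ^ (n : ℤ))]
  simp only [qq, ArithmeticFunction.sigma_apply, Nat.cast_sum, Nat.cast_pow, zpow_natCast]

lemma E4_coe (z : ℍ) : E4 z = E₄ z := by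
  rw [E4, E₄, E_eq_one_sub_tsum_divisors _ ⟨2, rfl⟩,
    show bernoulli 4 = -1 / 30 by decide +kernel]
  norm_num

lemma E6_coe (z : ℍ) : E6 z = E₆ z := by
  rw [E6, E₆, E_eq_one_sub_tsum_divisors _ ⟨3, rfl⟩,
    show bernoulli 6 = 1 / 42 by decide +kernel]
  norm_num

lemma E4_cube_sub_E6_sq (z : ℍ) : E4 z ^ 3 - E6 z ^ 2 = 1728 * dedekindEta z ^ 24 := by
  have h := ModularForm.discriminant_eq_E₄_cube_sub_E₆_sq z
  rw [← E4_coe, ← E6_coe, ModularForm.discriminant, ← dedekindEta_eq_eta] at h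
  linear_combination -1728 * h

lemma dedekindEta_ne_zero (z : ℍ) : dedekindEta z ≠ 0 :=
  dedekindEta_eq_eta ▸ ModularForm.eta_ne_zero z.im_pos

lemma E4_cube_sub_E6_sq_ne_zero (z : ℍ) : E4 z ^ 3 - E6 z ^ 2 ≠ 0 := by
  rw [E4_cube_sub_E6_sq]
  exact mul_ne_zero (by norm_num) (pow_ne_zero _ (dedekindEta_ne_zero z))

lemma E6_ne_zero_of_E4_eq_zero {z : ℍ} (h4 : E4 z = 0) : E6 z ≠ 0 := by
  have h := E4_cube_sub_E6_sq_ne_zero z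
  rw [h4] at h
  contrapose! h
  simp [h]

variable {F : ℂ → ℂ} {f : ℍ → ℂ}

lemma eventuallyEq_comp_ofComplex (hF : ∀ z : ℍ, F z = f z) (z : ℍ) :
    F =ᶠ[𝓝 (z : ℂ)] f ∘ ofComplex := by
  filter_upwards [isOpen_upperHalfPlaneSet.mem_nhds z.im_pos] with w hw
  rw [Function.comp_apply, ofComplex_apply_of_im_pos hw, ← hF]

lemma analyticAt_coe_of_mdifferentiable (hF : ∀ z : ℍ, F z = f z) (hf : MDiff f) (z : ℍ) :
    AnalyticAt ℂ F z :=
  ((UpperHalfPlane.mdifferentiable_iff.mp hf).analyticAt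
    (isOpen_upperHalfPlaneSet.mem_nhds z.im_pos)).congr (eventuallyEq_comp_ofComplex hF z).symm

lemma analyticAt_E4 (z : ℍ) : AnalyticAt ℂ E4 z :=
  analyticAt_coe_of_mdifferentiable E4_coe E₄.holo' z

lemma analyticAt_E6 (z : ℍ) : AnalyticAt ℂ E6 z :=
  analyticAt_coe_of_mdifferentiable E6_coe E₆.holo' z

lemma analyticAt_dedekindEta (z : ℍ) : AnalyticAt ℂ dedekindEta z := by
  refine DifferentiableOn.analyticAt (fun w hw ↦ ?_) (isOpen_upperHalfPlaneSet.mem_nhds z.im_pos)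
  rw [dedekindEta_eq_eta]
  exact (ModularForm.differentiableAt_eta_of_mem_upperHalfPlaneSet hw).differentiableWithinAt

lemma analyticAt_J (z : ℍ) : AnalyticAt ℂ J z :=
  ((analyticAt_E4 z).fun_pow 3).fun_div (((analyticAt_E4 z).fun_pow 3).fun_sub
    ((analyticAt_E6 z).fun_pow 2)) (E4_cube_sub_E6_sq_ne_zero z)

/- Trades `E₂` for `η` through `η' / η = (π i / 12) E₂`. -/
lemma deriv_eq_serreDerivative_add_logDeriv_dedekindEta (hF : ∀ z : ℍ, F z = f z) (k : ℂ) (z : ℍ) :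
    deriv F z = 2 * Real.pi * Complex.I * serreDerivative k f z +
      2 * k * logDeriv dedekindEta z * F z := by
  rw [dedekindEta_eq_eta, ModularForm.logDeriv_eta_eq_E2,
    (eventuallyEq_comp_ofComplex hF z).deriv_eq, serreDerivative_apply,
    normalizedDerivOfComplex, hF]
  field [two_pi_I_ne_zero]

lemma deriv_E4 (z : ℍ) :
    deriv E4 z = 8 * logDeriv dedekindEta z * E4 z - 2 * Real.pi * Complex.I / 3 * E6 z := by
  rw [deriv_eq_serreDerivative_add_logDeriv_dedekindEta E4_coe 4, serreDerivative_E₄, ← E6_coe]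
  ring

lemma deriv_E6 (z : ℍ) :
    deriv E6 z = 12 * logDeriv dedekindEta z * E6 z - Real.pi * Complex.I * E4 z ^ 2 := by
  rw [deriv_eq_serreDerivative_add_logDeriv_dedekindEta E6_coe 6, serreDerivative_E₆, ← E4_coe]
  ring

end Comparison

section ZeroOfE4

variable {p : ℍ}

lemma deriv_E4_ne_zero_of_E4_eq_zero (h4 : E4 p = 0) : deriv E4 p ≠ 0 := by
  rw [deriv_E4, h4]
  simp [E6_ne_zero_of_E4_eq_zero h4, Real.pi_ne_zero]

lemma deriv_deriv_E4_of_E4_eq_zero (h4 : E4 p = 0) :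
    deriv (deriv E4) p = 20 * logDeriv dedekindEta p * deriv E4 p := by
  have hlog : DifferentiableAt ℂ (logDeriv dedekindEta) p :=
    ((analyticAt_dedekindEta p).deriv.div (analyticAt_dedekindEta p)
      (dedekindEta_ne_zero p)).differentiableAt
  have hE4 := (analyticAt_E4 p).differentiableAt.hasDerivAt
  have hE6 := (analyticAt_E6 p).differentiableAt.hasDerivAt
  have hE4' : deriv E4 =ᶠ[𝓝 (p : ℂ)] fun w ↦
      8 * logDeriv dedekindEta w * E4 w - 2 * Real.pi * Complex.I / 3 * E6 w := by
    filter_upwards [isOpen_upperHalfPlaneSet.mem_nhds p.im_pos] with w hw using deriv_E4 ⟨w, hw⟩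
  rw [hE4'.deriv_eq, (((hlog.hasDerivAt.const_mul 8).fun_mul hE4).fun_sub
    (hE6.const_mul _)).deriv, deriv_E6, deriv_E4, h4]
  ring

lemma J_eq_zero_of_E4_eq_zero (h4 : E4 p = 0) : J p = 0 := by
  simp [J, h4]

lemma deriv_J_eq_zero_of_E4_eq_zero (h4 : E4 p = 0) : deriv J p = 0 := by
  have hE4 := (analyticAt_E4 p).differentiableAt.hasDerivAt
  have hE6 := (analyticAt_E6 p).differentiableAt.hasDerivAt
  have hJ : HasDerivAt J _ p := (hE4.fun_pow 3).fun_div ((hE4.fun_pow 3).fun_sub (hE6.fun_pow 2))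
    (E4_cube_sub_E6_sq_ne_zero p)
  rw [hJ.deriv, h4]
  simp

lemma deriv_comp_J_of_E4_eq_zero (h4 : E4 p = 0) {g : ℂ → ℂ} (hg : DifferentiableAt ℂ g 0) :
    deriv (fun z ↦ g (J z)) p = 0 := by
  have h : deriv (g ∘ J) p = deriv g (J p) * deriv J p :=
    deriv_comp_of_eq (p : ℂ) hg (analyticAt_J p).differentiableAt (J_eq_zero_of_E4_eq_zero h4)
  rwa [deriv_J_eq_zero_of_E4_eq_zero h4, mul_zero] at h

end ZeroOfE4

section EllipticPoint

lemma rho_im_pos : 0 < rho.im := by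
  have hrho : rho = cexp ((2 * Real.pi / 3 : ℝ) * Complex.I) := by
    rw [rho]
    push_cast
    ring_nf
  rw [hrho, Complex.exp_ofReal_mul_I_im]
  exact Real.sin_pos_of_pos_of_lt_pi (by positivity) (by linarith [Real.pi_pos])

lemma isPrimitiveRoot_rho : IsPrimitiveRoot rho 3 :=
  Complex.isPrimitiveRoot_exp 3 (by norm_num)

lemma rho_mul_rho_add_one : rho * (rho + 1) = -1 := by
  have h := isPrimitiveRoot_rho.geom_sum_eq_zero (by norm_num)
  simp only [Finset.sum_range_succ, Finset.sum_range_zero] at h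
  linear_combination h

lemma E4_add_one (z : ℂ) : E4 (z + 1) = E4 z := by
  have hq : qq (z + 1) = qq z := by
    rw [qq, mul_add, mul_one, Complex.exp_add, Complex.exp_two_pi_mul_I, mul_one, qq]
  simp only [E4, hq]

lemma E4_neg_inv (z : ℍ) : E4 (-z : ℂ)⁻¹ = z ^ 4 * E4 z := by
  have h : ((E₄ : ℍ → ℂ) ∣[(4 : ℤ)] ModularGroup.S) z = E₄ z :=
    congrFun (E₄.slash_action_eq' _ ⟨ModularGroup.S, rfl⟩) z
  rw [SlashInvariantForm.slash_S_apply, ← E4_coe, ← E4_coe] at h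
  have := z.ne_zero
  rw [← h]
  simp only [inv_neg, zpow_neg, zpow_ofNat]
  field_simp

lemma E4_rho : E4 rho = 0 := by
  have hrho : (-rho)⁻¹ = rho + 1 := by
    rw [inv_eq_iff_eq_inv]
    refine eq_inv_of_mul_eq_one_left ?_
    linear_combination -rho_mul_rho_add_one
  have h := E4_neg_inv ⟨rho, rho_im_pos⟩
  rw [coe_mk, hrho, E4_add_one, pow_succ rho 3, isPrimitiveRoot_rho.pow_eq_one, one_mul] at h
  exact (mul_eq_zero.mp (by linear_combination h : (1 - rho) * E4 rho = 0)).resolve_left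
    (sub_ne_zero.mpr (isPrimitiveRoot_rho.ne_one (by norm_num)).symm)

end EllipticPoint

theorem residue_at_rho_vanishes_general {p : ℍ} (h4 : E4 p = 0) {g : ℂ → ℂ}
    (hg : AnalyticAt ℂ g 0) :
    Tendsto (deriv fun z : ℂ ↦ (z - p) ^ 2 * (dedekindEta z ^ 20 * g (J z) / E4 z ^ 2))
      (𝓝[≠] (p : ℂ)) (𝓝 0) := by
  have hη := analyticAt_dedekindEta p
  have hgJ : AnalyticAt ℂ (fun z ↦ g (J z)) p :=
    hg.fun_comp_of_eq (analyticAt_J p) (J_eq_zero_of_E4_eq_zero h4)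
  have hnum : deriv (fun z ↦ dedekindEta z ^ 20 * g (J z)) p =
      20 * logDeriv dedekindEta p * (dedekindEta p ^ 20 * g (J p)) := by
    rw [((hη.differentiableAt.hasDerivAt.fun_pow 20).fun_mul
      hgJ.differentiableAt.hasDerivAt).deriv,
      deriv_comp_J_of_E4_eq_zero h4 hg.differentiableAt, logDeriv_apply]
    have := dedekindEta_ne_zero p
    field_simp
    simp only [Nat.cast_ofNat, Nat.add_one_sub_one, mul_zero, add_zero]
    ring
  have h := tendsto_deriv_sub_sq_mul_div_sq ((hη.fun_pow 20).fun_mul hgJ) (analyticAt_E4 p) h4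
    (deriv_E4_ne_zero_of_E4_eq_zero h4)
  convert h using 2
  rw [hnum, deriv_deriv_E4_of_E4_eq_zero h4]
  ring

/-- The residue of `η²⁰ / (E₄²·∏ⱼ(J−xⱼ)²)` at its double pole `τ = ρ` vanishes:
`lim_{τ→ρ, τ≠ρ} (d/dτ)[(τ−ρ)² f(τ)] = 0`. -/
theorem residue_at_rho_vanishes (n : ℕ) (x : Fin n → ℝ)
    (hx : ∀ j, x j ∈ Set.Ioo (0 : ℝ) 1) (hinj : Function.Injective x) :
    Tendsto
      (fun τ : ℂ => deriv (fun z : ℂ =>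
        (z - rho) ^ 2 *
          (dedekindEta z ^ 20 / (E4 z ^ 2 * ∏ j, (J z - (x j : ℂ)) ^ 2))) τ)
      (𝓝[≠] rho) (𝓝 0) := by
  have hx0 (j) : (0 : ℂ) - x j ≠ 0 := by
    simpa using (hx j).1.ne'
  have hg : AnalyticAt ℂ (fun w : ℂ ↦ (∏ j, (w - x j) ^ 2)⁻¹) 0 :=
    (Finset.analyticAt_fun_prod _ fun j _ ↦ (analyticAt_id.sub analyticAt_const).pow 2).inv
      (Finset.prod_ne_zero_iff.mpr fun j _ ↦ pow_ne_zero 2 (hx0 j))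
  have h := residue_at_rho_vanishes_general (p := ⟨rho, rho_im_pos⟩) E4_rho hg
  simpa only [← div_eq_mul_inv, div_div, mul_comm] using h
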